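/- Let J = q_0 Π_0 ρ_{0,L} Π_0 + q_1 Π_1 ρ_{1,L} Π_1 with q_0 + q_1 = 1, q_i ≥ 0, where Π_i are the eigenprojectors of Z⊗Z and ρ_{i,L} are logical encodings of single-qubit states ρ_i into the respective eigenspaces. Then the stabilizer robustness is additive over the blocks: R_F(J) = q_0 R_F(ρ_0) + q_1 R_F(ρ_1). -/

import Mathlib

open Matrix BigOperators Kronecker
open scoped ComplexOrder

noncomputable section

def sigmaX : Matrix (Fin 2) (Fin 2) ℂ := !![0, 1; 1, 0]
def sigmaY : Matrix (Fin 2) (Fin 2) ℂ := !![0, -Complex.I; Complex.I, 0]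
def sigmaZ : Matrix (Fin 2) (Fin 2) ℂ := !![1, 0; 0, -1]

def IsStab1 (σ : Matrix (Fin 2) (Fin 2) ℂ) : Prop :=
  ∃ a b c : ℝ, |a| + |b| + |c| ≤ 1 ∧
    σ = (1/2 : ℂ) • (1 + (a : ℂ) • sigmaX + (b : ℂ) • sigmaY + (c : ℂ) • sigmaZ)

def Rob1 (ρ : Matrix (Fin 2) (Fin 2) ℂ) : ℝ :=
  sInf {l : ℝ | 1 ≤ l ∧ ∃ s, IsStab1 s ∧ ((l : ℂ) • s - ρ).PosSemidef}

def pauliMat : Fin 4 → Matrix (Fin 2) (Fin 2) ℂ :=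
  ![1, sigmaX, sigmaY, sigmaZ]

def signedPauli2 (s : Bool) (a b : Fin 4) :
    Matrix (Fin 2 × Fin 2) (Fin 2 × Fin 2) ℂ :=
  (if s then (-1 : ℂ) else 1) • (pauliMat a ⊗ₖ pauliMat b)

def IsPureStab2 (σ : Matrix (Fin 2 × Fin 2) (Fin 2 × Fin 2) ℂ) : Prop :=
  ∃ (s₁ s₂ : Bool) (a₁ b₁ a₂ b₂ : Fin 4),
    signedPauli2 s₁ a₁ b₁ * signedPauli2 s₂ a₂ b₂
      = signedPauli2 s₂ a₂ b₂ * signedPauli2 s₁ a₁ b₁ ∧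
    σ = (1/4 : ℂ) • ((1 + signedPauli2 s₁ a₁ b₁) * (1 + signedPauli2 s₂ a₂ b₂)) ∧
    σ.trace = 1

def IsStab2 (σ : Matrix (Fin 2 × Fin 2) (Fin 2 × Fin 2) ℂ) : Prop :=
  σ ∈ convexHull ℝ {τ | IsPureStab2 τ}

def Rob2 (ρ : Matrix (Fin 2 × Fin 2) (Fin 2 × Fin 2) ℂ) : ℝ :=
  sInf {l : ℝ | 1 ≤ l ∧ ∃ s, IsStab2 s ∧ ((l : ℂ) • s - ρ).PosSemidef}

/-- Eigenprojectors of `Z⊗Z`: `Π₀ = (II + ZZ)/2`, `Π₁ = (II − ZZ)/2`. -/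
def PiZZ : Fin 2 → Matrix (Fin 2 × Fin 2) (Fin 2 × Fin 2) ℂ :=
  ![(1/2 : ℂ) • (1 + sigmaZ ⊗ₖ sigmaZ), (1/2 : ℂ) • (1 - sigmaZ ⊗ₖ sigmaZ)]

/-- Logical encoding of `ρ = (1/2)(I + xX + yY)` into block `i` of `Z⊗Z`. -/
def encBlock (i : Fin 2) (x y : ℝ) : Matrix (Fin 2 × Fin 2) (Fin 2 × Fin 2) ℂ :=
  PiZZ i * ((1/2 : ℂ) • (1 + (x : ℂ) • (sigmaX ⊗ₖ sigmaX)
    + (y : ℂ) • (sigmaY ⊗ₖ sigmaX))) * PiZZ i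

/-!
Let `V i` be the isometry onto the `(-1) ^ i` eigenspace of `Z⊗Z`, so that the encoding of `ρ` into
block `i` is `V i * ρ * (V i)ᴴ`.

Compressing `J ≤ λ σ` by `V i` gives `q i • ρ i ≤ λ (V i)ᴴ σ (V i)`. A Pauli operator compresses to
`0` or to plus or minus a one-qubit Pauli matrix, so a compressed stabilizer state is a multiple
`t i • τ i` of a one-qubit stabilizer state, whence `q i * R(ρ i) ≤ λ * t i`. The `t i` sum to `1`
because the two blocks exhaust the trace, which gives `∑ i, q i * R(ρ i) ≤ R(J)`. Conversely,
encoding preserves stabilizer states, hence does not increase the robustness, and the robustness is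
convex.
-/

section Robustness

variable {m n : Type*} {F : Set (Matrix m m ℂ)} {G : Set (Matrix n n ℂ)}

/-- The factors `λ ≥ 1` such that `ρ ≤ λ σ` in the Loewner order for some free state `σ ∈ F`. -/
def robustnessFactors (F : Set (Matrix m m ℂ)) (ρ : Matrix m m ℂ) : Set ℝ :=
  {l | 1 ≤ l ∧ ∃ σ ∈ F, (l • σ - ρ).PosSemidef}

/-- The generalized robustness of `ρ` relative to the set `F` of free states; it takes the junk
value `0` when no factor is admissible. -/
def robustness (F : Set (Matrix m m ℂ)) (ρ : Matrix m m ℂ) : ℝ :=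
  sInf (robustnessFactors F ρ)

lemma bddBelow_robustnessFactors (F : Set (Matrix m m ℂ)) (ρ : Matrix m m ℂ) :
    BddBelow (robustnessFactors F ρ) :=
  ⟨1, fun _ hl => hl.1⟩

lemma robustness_le {ρ : Matrix m m ℂ} {l : ℝ} (hl : l ∈ robustnessFactors F ρ) :
    robustness F ρ ≤ l :=
  csInf_le (bddBelow_robustnessFactors F ρ) hl

lemma add_mul_mem_robustnessFactors (hF : Convex ℝ F) {ρ ρ' : Matrix m m ℂ} {l l' a b : ℝ}
    (hl : l ∈ robustnessFactors F ρ) (hl' : l' ∈ robustnessFactors F ρ')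
    (ha : 0 ≤ a) (hb : 0 ≤ b) (hab : a + b = 1) :
    a * l + b * l' ∈ robustnessFactors F (a • ρ + b • ρ') := by
  obtain ⟨hl1, σ, hσ, hpsd⟩ := hl
  obtain ⟨hl1', σ', hσ', hpsd'⟩ := hl'
  obtain ⟨τ, hτ, hτ_eq⟩ := hF.exists_mem_add_smul_eq hσ hσ'
    (mul_nonneg ha (zero_le_one.trans hl1)) (mul_nonneg hb (zero_le_one.trans hl1'))
  refine ⟨?_, τ, hτ, ?_⟩
  · calc (1 : ℝ) = a * 1 + b * 1 := by rw [mul_one, mul_one, hab]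
      _ ≤ a * l + b * l' := by gcongr
  · have hdiff : (a * l + b * l') • τ - (a • ρ + b • ρ') =
        a • (l • σ - ρ) + b • (l' • σ' - ρ') := by rw [hτ_eq]; module
    rw [hdiff]
    exact (hpsd.smul ha).add (hpsd'.smul hb)

theorem convexOn_robustness (hF : Convex ℝ F) :
    ConvexOn ℝ {ρ | (robustnessFactors F ρ).Nonempty} (robustness F) := by
  refine ⟨fun ρ ⟨l, hl⟩ ρ' ⟨l', hl'⟩ a b ha hb hab =>
    ⟨_, add_mul_mem_robustnessFactors hF hl hl' ha hb hab⟩, fun ρ hρ ρ' hρ' a b ha hb hab => ?_⟩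
  refine le_of_forall_pos_le_add fun ε hε => ?_
  obtain ⟨l, hl, hlt⟩ := exists_lt_of_csInf_lt hρ (lt_add_of_pos_right (robustness F ρ) hε)
  obtain ⟨l', hl', hlt'⟩ := exists_lt_of_csInf_lt hρ' (lt_add_of_pos_right (robustness F ρ') hε)
  calc robustness F (a • ρ + b • ρ')
      ≤ a * l + b * l' := robustness_le (add_mul_mem_robustnessFactors hF hl hl' ha hb hab)
    _ ≤ a * (robustness F ρ + ε) + b * (robustness F ρ' + ε) := by gcongr
    _ = a • robustness F ρ + b • robustness F ρ' + (a + b) * ε := by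
      rw [smul_eq_mul, smul_eq_mul]; ring
    _ = a • robustness F ρ + b • robustness F ρ' + ε := by rw [hab, one_mul]

open scoped MatrixOrder Matrix.Norms.L2Operator in
lemma exists_smul_one_sub_posSemidef [Finite m] [DecidableEq m] {A : Matrix m m ℂ}
    (hA : A.IsHermitian) : ∃ c : ℝ, (c • (1 : Matrix m m ℂ) - A).PosSemidef := by
  have := Fintype.ofFinite m
  refine ⟨‖A‖, Matrix.le_iff.mp ?_⟩
  rw [← Algebra.algebraMap_eq_smul_one]
  exact IsSelfAdjoint.le_algebraMap_norm_self hA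

lemma robustnessFactors_nonempty [Finite m] [DecidableEq m] {r : ℝ} (hr : 0 < r)
    (hF : r • (1 : Matrix m m ℂ) ∈ F) {ρ : Matrix m m ℂ} (hρ : ρ.IsHermitian) :
    (robustnessFactors F ρ).Nonempty := by
  obtain ⟨c, hc⟩ := exists_smul_one_sub_posSemidef hρ
  refine ⟨max 1 (c / r), le_max_left _ _, _, hF, ?_⟩
  have hcr : 0 ≤ max 1 (c / r) * r - c := sub_nonneg.mpr ((div_le_iff₀ hr).mp (le_max_right _ _))
  have hsplit : max 1 (c / r) • r • (1 : Matrix m m ℂ) - ρ =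
      (max 1 (c / r) * r - c) • (1 : Matrix m m ℂ) + (c • (1 : Matrix m m ℂ) - ρ) := by module
  rw [hsplit]
  exact (Matrix.PosSemidef.one.smul hcr).add hc

lemma mul_robustness_le [Fintype m] (hF : ∀ σ ∈ F, σ.trace = 1) {ρ σ : Matrix m m ℂ} {q t : ℝ}
    (hρ : ρ.trace = 1) (hq : 0 ≤ q) (hσ : σ ∈ F) (h : (t • σ - q • ρ).PosSemidef) :
    q * robustness F ρ ≤ t := by
  have hqt : q ≤ t := by
    have htr : (t • σ - q • ρ).trace = ((t - q : ℝ) : ℂ) := by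
      simp [Matrix.trace_sub, Matrix.trace_smul, hF σ hσ, hρ]
    exact sub_nonneg.mp (Complex.zero_le_real.mp (htr ▸ h.trace_nonneg))
  rcases hq.eq_or_lt with rfl | hq_pos
  · rwa [zero_mul]
  rw [← le_div_iff₀' hq_pos]
  refine robustness_le ⟨(one_le_div hq_pos).mpr hqt, σ, hσ, ?_⟩
  have hscale : (t / q) • σ - ρ = q⁻¹ • (t • σ - q • ρ) := by
    rw [smul_sub, smul_smul, smul_smul, inv_mul_cancel₀ hq_pos.ne', one_smul, div_eq_inv_mul]
  exact hscale ▸ h.smul (inv_nonneg.mpr hq)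

variable [Fintype m] [Finite n]

lemma robustnessFactors_subset_conj {V : Matrix n m ℂ} (hV : ∀ σ ∈ F, V * σ * Vᴴ ∈ G)
    (ρ : Matrix m m ℂ) : robustnessFactors F ρ ⊆ robustnessFactors G (V * ρ * Vᴴ) := by
  rintro l ⟨hl, σ, hσ, hpsd⟩
  refine ⟨hl, _, hV σ hσ, ?_⟩
  simpa only [Matrix.mul_sub, Matrix.sub_mul, Matrix.mul_smul, Matrix.smul_mul]
    using hpsd.mul_mul_conjTranspose_same V

lemma robustness_conj_le {V : Matrix n m ℂ} (hV : ∀ σ ∈ F, V * σ * Vᴴ ∈ G)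
    {ρ : Matrix m m ℂ} (hρ : (robustnessFactors F ρ).Nonempty) :
    robustness G (V * ρ * Vᴴ) ≤ robustness F ρ :=
  csInf_le_csInf (bddBelow_robustnessFactors _ _) hρ (robustnessFactors_subset_conj hV ρ)

end Robustness

lemma exists_smul_eq_of_mem_hull {E : Type*} [AddCommGroup E] [Module ℝ E] {s : Set E}
    (hs : Convex ℝ s) (hne : s.Nonempty) {x : E} (hx : x ∈ PointedCone.hull ℝ s) :
    ∃ t : ℝ, 0 ≤ t ∧ ∃ y ∈ s, t • y = x := by
  induction hx using Submodule.span_induction with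
  | mem y hy => exact ⟨1, zero_le_one, y, hy, one_smul _ _⟩
  | zero => exact ⟨0, le_rfl, _, hne.choose_spec, zero_smul _ _⟩
  | add _ _ _ _ hy hz =>
    obtain ⟨t, ht, y, hy, rfl⟩ := hy
    obtain ⟨u, hu, z, hz, rfl⟩ := hz
    exact ⟨t + u, add_nonneg ht hu, hs.exists_mem_add_smul_eq hy hz ht hu⟩
  | smul c _ _ hy =>
    obtain ⟨t, ht, y, hy, rfl⟩ := hy
    exact ⟨c * t, mul_nonneg c.2 ht, y, hy, mul_smul _ _ _⟩

section Blocks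

variable {ι m n : Type*} [Fintype ι] [Fintype m] [Fintype n] {F : Set (Matrix m m ℂ)}
  {G : Set (Matrix n n ℂ)} {V : ι → Matrix n m ℂ} {q : ι → ℝ} {ρ : ι → Matrix m m ℂ}

lemma sum_trace_compress [DecidableEq n] (hV : ∑ i, V i * (V i)ᴴ = 1) (σ : Matrix n n ℂ) :
    ∑ i, ((V i)ᴴ * σ * V i).trace = σ.trace := by
  have hcycle (i : ι) : ((V i)ᴴ * σ * V i).trace = (V i * (V i)ᴴ * σ).trace := by
    rw [Matrix.trace_mul_cycle]
  simp only [hcycle, ← Matrix.trace_sum, ← Matrix.sum_mul, hV, Matrix.one_mul]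

variable [DecidableEq ι] [DecidableEq m]

lemma compress_sum_conj (hV : ∀ i j, (V i)ᴴ * V j = if i = j then 1 else 0) (i : ι) :
    (V i)ᴴ * (∑ j, q j • (V j * ρ j * (V j)ᴴ)) * V i = q i • ρ i := by
  have hblock (j : ι) : (V i)ᴴ * (V j * ρ j * (V j)ᴴ) * V i =
      ((V i)ᴴ * V j) * ρ j * ((V j)ᴴ * V i) := by simp only [Matrix.mul_assoc]
  simp [Matrix.mul_sum, Matrix.sum_mul, hblock, hV]

variable [DecidableEq n]

lemma sum_mul_robustness_le (horth : ∀ i j, (V i)ᴴ * V j = if i = j then 1 else 0)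
    (hcomplete : ∑ i, V i * (V i)ᴴ = 1) (hF : Convex ℝ F) (hne : F.Nonempty)
    (hF_trace : ∀ σ ∈ F, σ.trace = 1) (hG_trace : ∀ σ ∈ G, σ.trace = 1)
    (hcompress : ∀ i, ∀ σ ∈ G, (V i)ᴴ * σ * V i ∈ PointedCone.hull ℝ F)
    (hq : ∀ i, 0 ≤ q i) (hρ : ∀ i, (ρ i).trace = 1) {l : ℝ}
    (hl : l ∈ robustnessFactors G (∑ i, q i • (V i * ρ i * (V i)ᴴ))) :
    ∑ i, q i * robustness F (ρ i) ≤ l := by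
  obtain ⟨-, σ, hσ, hpsd⟩ := hl
  choose t _ τ hτ hτ_eq using fun i => exists_smul_eq_of_mem_hull hF hne (hcompress i σ hσ)
  have hsum : ∑ i, t i = 1 := by
    have htrace := (sum_trace_compress hcomplete σ).trans (hG_trace σ hσ)
    simp only [← hτ_eq, Matrix.trace_smul, hF_trace _ (hτ _), Complex.real_smul, mul_one] at htrace
    exact_mod_cast htrace
  have hblock (i : ι) : ((l * t i) • τ i - q i • ρ i).PosSemidef := by
    have h := hpsd.conjTranspose_mul_mul_same (V i)
    rwa [Matrix.mul_sub, Matrix.sub_mul, compress_sum_conj horth, Matrix.mul_smul,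
      Matrix.smul_mul, ← hτ_eq, smul_smul] at h
  calc ∑ i, q i * robustness F (ρ i)
      ≤ ∑ i, l * t i :=
        Finset.sum_le_sum fun i _ => mul_robustness_le hF_trace (hρ i) (hq i) (hτ i) (hblock i)
    _ = l := by rw [← Finset.mul_sum, hsum, mul_one]

theorem robustness_sum_conj (horth : ∀ i j, (V i)ᴴ * V j = if i = j then 1 else 0)
    (hcomplete : ∑ i, V i * (V i)ᴴ = 1) (hF : Convex ℝ F) (hne : F.Nonempty) (hG : Convex ℝ G)
    (hF_trace : ∀ σ ∈ F, σ.trace = 1) (hG_trace : ∀ σ ∈ G, σ.trace = 1)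
    (hencode : ∀ i, ∀ σ ∈ F, V i * σ * (V i)ᴴ ∈ G)
    (hcompress : ∀ i, ∀ σ ∈ G, (V i)ᴴ * σ * V i ∈ PointedCone.hull ℝ F)
    (hq : ∀ i, 0 ≤ q i) (hq_sum : ∑ i, q i = 1) (hρ : ∀ i, (ρ i).trace = 1)
    (hfactors : ∀ i, (robustnessFactors F (ρ i)).Nonempty) :
    robustness G (∑ i, q i • (V i * ρ i * (V i)ᴴ)) = ∑ i, q i * robustness F (ρ i) := by
  have hconv := convexOn_robustness hG
  have hmem (i : ι) : (robustnessFactors G (V i * ρ i * (V i)ᴴ)).Nonempty :=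
    (hfactors i).mono (robustnessFactors_subset_conj (hencode i) _)
  apply le_antisymm
  · calc robustness G (∑ i, q i • (V i * ρ i * (V i)ᴴ))
        ≤ ∑ i, q i * robustness G (V i * ρ i * (V i)ᴴ) :=
          hconv.map_sum_le (fun i _ => hq i) hq_sum fun i _ => hmem i
      _ ≤ ∑ i, q i * robustness F (ρ i) := Finset.sum_le_sum fun i _ =>
          mul_le_mul_of_nonneg_left (robustness_conj_le (hencode i) (hfactors i)) (hq i)
  · exact le_csInf (hconv.1.sum_mem (fun i _ => hq i) hq_sum fun i _ => hmem i) fun l hl =>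
      sum_mul_robustness_le horth hcomplete hF hne hF_trace hG_trace hcompress hq hρ hl

end Blocks

section IsometryCompression

variable {m n : Type*} [Fintype m] [DecidableEq m] [Fintype n] {V : Matrix n m ℂ}
  {P : Matrix n n ℂ}

lemma compress_mul_of_commute_left (hV : Vᴴ * V = 1) (hP : Commute P (V * Vᴴ))
    (Q : Matrix n n ℂ) : Vᴴ * (P * Q) * V = Vᴴ * P * V * (Vᴴ * Q * V) := by
  calc Vᴴ * (P * Q) * V = Vᴴ * V * Vᴴ * P * Q * V := by simp only [hV, Matrix.mul_assoc,
        Matrix.one_mul]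
    _ = Vᴴ * (V * Vᴴ * P) * Q * V := by simp only [Matrix.mul_assoc]
    _ = Vᴴ * P * V * (Vᴴ * Q * V) := by rw [← hP.eq]; simp only [Matrix.mul_assoc]

lemma compress_mul_of_commute_right (hV : Vᴴ * V = 1) (hP : Commute P (V * Vᴴ))
    (Q : Matrix n n ℂ) : Vᴴ * (Q * P) * V = Vᴴ * Q * V * (Vᴴ * P * V) := by
  calc Vᴴ * (Q * P) * V = Vᴴ * Q * (P * (V * (Vᴴ * V))) := by
        rw [hV, Matrix.mul_one]; simp only [Matrix.mul_assoc]
    _ = Vᴴ * Q * (P * (V * Vᴴ)) * V := by simp only [Matrix.mul_assoc]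
    _ = Vᴴ * Q * V * (Vᴴ * P * V) := by rw [hP.eq]; simp only [Matrix.mul_assoc]

lemma compress_eq_zero_of_mul_eq [DecidableEq n] (hV : Vᴴ * V = 1)
    (hP : P * (V * Vᴴ) = (1 - V * Vᴴ) * P) : Vᴴ * P * V = 0 := by
  calc Vᴴ * P * V = Vᴴ * (P * (V * Vᴴ)) * V := by
        simp only [Matrix.mul_assoc, hV, Matrix.mul_one]
    _ = (Vᴴ - Vᴴ * V * Vᴴ) * P * V := by
        rw [hP]; simp only [Matrix.sub_mul, Matrix.mul_sub, Matrix.one_mul, Matrix.mul_assoc]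
    _ = 0 := by rw [hV, Matrix.one_mul, sub_self, Matrix.zero_mul, Matrix.zero_mul]

end IsometryCompression

section PhaseRelations

variable {n : Type*} [Fintype n] {A B C : Matrix n n ℂ} {k : ℕ}

lemma mul_swap_of_mul_eq_I_pow_smul (hA : A.IsHermitian) (hB : B.IsHermitian)
    (hC : C.IsHermitian) (h : A * B = Complex.I ^ k • C) : B * A = (-1 : ℂ) ^ k • (A * B) := by
  calc B * A = (A * B)ᴴ := by rw [Matrix.conjTranspose_mul, hA.eq, hB.eq]
    _ = (-Complex.I) ^ k • C := by
      rw [h, Matrix.conjTranspose_smul, hC.eq, star_pow, Complex.star_def, Complex.conj_I]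
    _ = (-1 : ℂ) ^ k • (A * B) := by rw [h, smul_smul, ← mul_pow, neg_one_mul]

lemma even_of_commute_of_mul_eq_I_pow_smul [DecidableEq n] [Nonempty n] (hA : A.IsHermitian)
    (hB : B.IsHermitian) (hC : C.IsHermitian) (hAA : A * A = 1) (hBB : B * B = 1)
    (h : A * B = Complex.I ^ k • C) (hcomm : Commute A B) : Even k := by
  by_contra hk
  have hneg : A * B = -(A * B) := by
    rw [← neg_one_smul ℂ (A * B), ← (Nat.not_even_iff_odd.mp hk).neg_one_pow,
      ← mul_swap_of_mul_eq_I_pow_smul hA hB hC h, hcomm.eq]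
  have hone : (1 : Matrix n n ℂ) = A * (A * B) * B := by
    rw [← Matrix.mul_assoc A, hAA, Matrix.one_mul, hBB]
  have hzero : A * B = 0 := Matrix.ext fun i j => self_eq_neg.mp (congrFun₂ hneg i j)
  rw [hzero, Matrix.mul_zero, Matrix.zero_mul] at hone
  exact one_ne_zero hone

end PhaseRelations

/-- The exponent of `i` in the product `σ_a σ_b = i ^ pauliPhase a b • σ_c` of Pauli matrices. -/
def pauliPhase : Fin 4 → Fin 4 → ℕ :=
  ![![0, 0, 0, 0], ![0, 0, 1, 3], ![0, 3, 0, 1], ![0, 1, 3, 0]]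

/-- The index of the Pauli matrix to which `σ_a σ_b` is proportional. -/
def pauliIndex : Fin 4 → Fin 4 → Fin 4 :=
  ![![0, 1, 2, 3], ![1, 0, 3, 2], ![2, 3, 0, 1], ![3, 2, 1, 0]]

lemma pauliMat_mul (a b : Fin 4) :
    pauliMat a * pauliMat b = Complex.I ^ pauliPhase a b • pauliMat (pauliIndex a b) := by
  ext k l
  fin_cases a <;> fin_cases b <;> fin_cases k <;> fin_cases l <;>
    simp [pauliMat, pauliPhase, pauliIndex, sigmaX, sigmaY, sigmaZ, Complex.I_pow_three]

lemma isHermitian_pauliMat (a : Fin 4) : (pauliMat a).IsHermitian := by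
  ext k l
  fin_cases a <;> fin_cases k <;> fin_cases l <;> simp [pauliMat, sigmaX, sigmaY, sigmaZ]

lemma pauliMat_mul_self (a : Fin 4) : pauliMat a * pauliMat a = 1 := by
  rw [pauliMat_mul]
  fin_cases a <;> simp [pauliPhase, pauliIndex, pauliMat]

lemma eq_zero_or_eq_of_commute_pauliMat {a b : Fin 4} (h : Commute (pauliMat a) (pauliMat b)) :
    a = 0 ∨ b = 0 ∨ a = b := by
  have heven : Even (pauliPhase a b) :=
    even_of_commute_of_mul_eq_I_pow_smul (isHermitian_pauliMat a) (isHermitian_pauliMat b)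
      (isHermitian_pauliMat _) (pauliMat_mul_self a) (pauliMat_mul_self b) (pauliMat_mul a b) h
  have hphase : ∀ a b, Even (pauliPhase a b) → a = 0 ∨ b = 0 ∨ a = b := by decide
  exact hphase a b heven

lemma isHermitian_pauliMat_kronecker (a b : Fin 4) :
    (pauliMat a ⊗ₖ pauliMat b).IsHermitian := by
  rw [Matrix.IsHermitian, Matrix.conjTranspose_kronecker, isHermitian_pauliMat,
    isHermitian_pauliMat]

lemma signedPauli2_eq_I_pow_smul (s : Bool) (a b : Fin 4) :
    signedPauli2 s a b = Complex.I ^ (2 * s.toNat) • (pauliMat a ⊗ₖ pauliMat b) := by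
  cases s <;> simp [signedPauli2]

lemma exists_signedPauli2_eq_I_pow_smul {k : ℕ} (hk : Even k) (a b : Fin 4) :
    ∃ s, signedPauli2 s a b = Complex.I ^ k • (pauliMat a ⊗ₖ pauliMat b) := by
  obtain ⟨j, rfl⟩ := hk
  rw [← two_mul, pow_mul, Complex.I_sq]
  rcases neg_one_pow_eq_or ℂ j with hj | hj
  · exact ⟨false, by simp [signedPauli2, hj]⟩
  · exact ⟨true, by simp [signedPauli2, hj]⟩

lemma isHermitian_signedPauli2 (s : Bool) (a b : Fin 4) : (signedPauli2 s a b).IsHermitian := by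
  rw [Matrix.IsHermitian, signedPauli2, Matrix.conjTranspose_smul, isHermitian_pauliMat_kronecker]
  cases s <;> simp

lemma signedPauli2_mul_self (s : Bool) (a b : Fin 4) :
    signedPauli2 s a b * signedPauli2 s a b = 1 := by
  rw [signedPauli2, smul_mul_smul_comm, ← Matrix.mul_kronecker_mul, pauliMat_mul_self,
    pauliMat_mul_self, Matrix.one_kronecker_one]
  cases s <;> simp

lemma signedPauli2_mul (s t : Bool) (a b c d : Fin 4) :
    signedPauli2 s a b * signedPauli2 t c d =
      Complex.I ^ (2 * s.toNat + 2 * t.toNat + (pauliPhase a c + pauliPhase b d)) •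
        (pauliMat (pauliIndex a c) ⊗ₖ pauliMat (pauliIndex b d)) := by
  rw [signedPauli2_eq_I_pow_smul, signedPauli2_eq_I_pow_smul, smul_mul_smul_comm,
    ← Matrix.mul_kronecker_mul, pauliMat_mul, pauliMat_mul, Matrix.smul_kronecker,
    Matrix.kronecker_smul, smul_smul, smul_smul]
  ring_nf

lemma exists_signedPauli2_mul_eq {s t : Bool} {a b c d : Fin 4}
    (h : Commute (signedPauli2 s a b) (signedPauli2 t c d)) :
    ∃ u e f, signedPauli2 s a b * signedPauli2 t c d = signedPauli2 u e f := by
  have heven := even_of_commute_of_mul_eq_I_pow_smul (isHermitian_signedPauli2 s a b)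
    (isHermitian_signedPauli2 t c d) (isHermitian_pauliMat_kronecker _ _)
    (signedPauli2_mul_self s a b) (signedPauli2_mul_self t c d) (signedPauli2_mul s t a b c d) h
  obtain ⟨u, hu⟩ := exists_signedPauli2_eq_I_pow_smul heven (pauliIndex a c) (pauliIndex b d)
  exact ⟨u, _, _, (signedPauli2_mul s t a b c d).trans hu.symm⟩

lemma commute_or_anticommute_signedPauli2 (s t : Bool) (a b c d : Fin 4) :
    Commute (signedPauli2 s a b) (signedPauli2 t c d) ∨
      signedPauli2 s a b * signedPauli2 t c d = -(signedPauli2 t c d * signedPauli2 s a b) := by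
  have hswap := mul_swap_of_mul_eq_I_pow_smul (isHermitian_signedPauli2 s a b)
    (isHermitian_signedPauli2 t c d) (isHermitian_pauliMat_kronecker _ _)
    (signedPauli2_mul s t a b c d)
  rcases neg_one_pow_eq_or ℂ
    (2 * s.toNat + 2 * t.toNat + (pauliPhase a c + pauliPhase b d)) with hsign | hsign
  · exact .inl (by rw [hsign, one_smul] at hswap; exact hswap.symm)
  · exact .inr (by rw [hsign, neg_one_smul] at hswap; rw [hswap, neg_neg])

/-- The isometry onto the `(-1) ^ i` eigenspace of `Z⊗Z` that sends the basis state `k` to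
`(k, k + i)`. -/
def blockIsometry (i : Fin 2) : Matrix (Fin 2 × Fin 2) (Fin 2) ℂ :=
  (1 : Matrix (Fin 2 × Fin 2) (Fin 2 × Fin 2) ℂ).submatrix id fun k => (k, k + i)

/-- The two-qubit Pauli operator `σ_c ⊗ 1` (for `c = 0, 3`) or `σ_c ⊗ X` (for `c = 1, 2`), which
commutes with `Z⊗Z` and acts as `σ_c` on both of its eigenspaces. -/
def logicalPauli (c : Fin 4) : Matrix (Fin 2 × Fin 2) (Fin 2 × Fin 2) ℂ :=
  pauliMat c ⊗ₖ pauliMat (![0, 1, 1, 0] c)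

lemma conjTranspose_blockIsometry_mul (i j : Fin 2) :
    (blockIsometry i)ᴴ * blockIsometry j = if i = j then 1 else 0 := by
  ext k l
  fin_cases i <;> fin_cases j <;> fin_cases k <;> fin_cases l <;>
    simp [blockIsometry, Matrix.mul_apply, Matrix.one_apply]

lemma conjTranspose_blockIsometry_mul_self (i : Fin 2) :
    (blockIsometry i)ᴴ * blockIsometry i = 1 := by
  rw [conjTranspose_blockIsometry_mul, if_pos rfl]

lemma blockIsometry_mul_conjTranspose (i : Fin 2) :
    blockIsometry i * (blockIsometry i)ᴴ = PiZZ i := by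
  ext ⟨k, k'⟩ ⟨l, l'⟩
  fin_cases i <;> fin_cases k <;> fin_cases k' <;> fin_cases l <;> fin_cases l' <;>
    simp [blockIsometry, PiZZ, sigmaZ, Matrix.mul_apply, Matrix.one_apply] <;> norm_num

lemma PiZZ_eq (i : Fin 2) : PiZZ i = (1 / 2 : ℂ) • (1 + signedPauli2 (i = 1) 3 3) := by
  fin_cases i <;> simp [PiZZ, signedPauli2, pauliMat, sub_eq_add_neg]

lemma sum_PiZZ : ∑ i, PiZZ i = 1 := by
  rw [Fin.sum_univ_two, PiZZ]
  simp only [Matrix.cons_val_zero, Matrix.cons_val_one]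
  module

lemma hadamard_pauliMat (a b : Fin 4) :
    pauliMat a ⊙ pauliMat b =
      ((![![1, 0, 0, 1], ![0, 1, 1, 0], ![0, 1, -1, 0], ![1, 0, 0, 1]] a b : SignType) : ℝ) •
        pauliMat (![![0, 0, 0, 3], ![0, 1, 2, 0], ![0, 2, 1, 0], ![3, 0, 0, 0]] a b) := by
  ext k l
  fin_cases a <;> fin_cases b <;> fin_cases k <;> fin_cases l <;>
    simp [pauliMat, sigmaX, sigmaY, sigmaZ]

lemma submatrix_add_pauliMat (i : Fin 2) (b : Fin 4) :
    (pauliMat b).submatrix (· + i) (· + i) =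
      ((![1, 1, -1, -1] b ^ (i : ℕ) : SignType) : ℝ) • pauliMat b := by
  ext k l
  fin_cases b <;> fin_cases i <;> fin_cases k <;> fin_cases l <;>
    simp [pauliMat, sigmaX, sigmaY, sigmaZ]

lemma compress_kronecker (i : Fin 2) (A B : Matrix (Fin 2) (Fin 2) ℂ) :
    (blockIsometry i)ᴴ * (A ⊗ₖ B) * blockIsometry i = A ⊙ B.submatrix (· + i) (· + i) := by
  ext k l
  simp [blockIsometry, Matrix.mul_apply, Matrix.one_apply]

lemma compress_logicalPauli (i : Fin 2) (c : Fin 4) :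
    (blockIsometry i)ᴴ * logicalPauli c * blockIsometry i = pauliMat c := by
  rw [logicalPauli, compress_kronecker, submatrix_add_pauliMat, Matrix.hadamard_smul,
    hadamard_pauliMat]
  fin_cases c <;> simp

lemma exists_compress_signedPauli2_eq (i : Fin 2) (s : Bool) (a b : Fin 4) :
    ∃ (ε : SignType) (c : Fin 4),
      (blockIsometry i)ᴴ * signedPauli2 s a b * blockIsometry i = (ε : ℝ) • pauliMat c := by
  have hs : signedPauli2 s a b =
      (((if s then -1 else 1) : SignType) : ℝ) • (pauliMat a ⊗ₖ pauliMat b) := by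
    cases s <;> simp [signedPauli2]
  rw [hs, Matrix.mul_smul, Matrix.smul_mul, compress_kronecker, submatrix_add_pauliMat,
    Matrix.hadamard_smul, hadamard_pauliMat, smul_smul, smul_smul, ← SignType.coe_mul,
    ← SignType.coe_mul]
  exact ⟨_, _, rfl⟩

/-- The Hermitian trace-one matrix with Bloch vector `(a, b, c)`. -/
def blochMat (a b c : ℝ) : Matrix (Fin 2) (Fin 2) ℂ :=
  (1 / 2 : ℂ) • (1 + (a : ℂ) • sigmaX + (b : ℂ) • sigmaY + (c : ℂ) • sigmaZ)

lemma blochMat_zero (a b : ℝ) :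
    blochMat a b 0 = (1 / 2 : ℂ) • (1 + (a : ℂ) • sigmaX + (b : ℂ) • sigmaY) := by
  rw [blochMat, Complex.ofReal_zero, zero_smul, add_zero]

lemma trace_blochMat (a b c : ℝ) : (blochMat a b c).trace = 1 := by
  simp [blochMat, Matrix.trace_fin_two, sigmaX, sigmaY, sigmaZ]

lemma isHermitian_blochMat (a b c : ℝ) : (blochMat a b c).IsHermitian := by
  ext k l
  fin_cases k <;> fin_cases l <;> simp [blochMat, sigmaX, sigmaY, sigmaZ, mul_add]

lemma isStab1_blochMat {a b c : ℝ} (h : |a| + |b| + |c| ≤ 1) : IsStab1 (blochMat a b c) :=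
  ⟨a, b, c, h, rfl⟩

lemma IsStab1.trace_eq_one {σ : Matrix (Fin 2) (Fin 2) ℂ} (hσ : IsStab1 σ) : σ.trace = 1 := by
  obtain ⟨a, b, c, -, rfl⟩ := hσ
  exact trace_blochMat a b c

lemma convex_isStab1 : Convex ℝ {σ | IsStab1 σ} := by
  rintro _ ⟨a, b, c, h, rfl⟩ _ ⟨a', b', c', h', rfl⟩ r r' hr hr' hrr
  have habs (x y : ℝ) : |r * x + r' * y| ≤ r * |x| + r' * |y| := by
    simpa only [abs_mul, abs_of_nonneg hr, abs_of_nonneg hr'] using abs_add_le (r * x) (r' * y)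
  refine ⟨r * a + r' * a', r * b + r' * b', r * c + r' * c', ?_, ?_⟩
  · calc |r * a + r' * a'| + |r * b + r' * b'| + |r * c + r' * c'|
        ≤ r * (|a| + |b| + |c|) + r' * (|a'| + |b'| + |c'|) := by
          linarith [habs a a', habs b b', habs c c']
      _ ≤ r * 1 + r' * 1 := by gcongr
      _ = 1 := by rw [mul_one, mul_one, hrr]
  · obtain rfl : r' = 1 - r := by linarith
    simp only [← Complex.coe_smul]
    push_cast
    module

lemma one_add_smul_pauliMat_mem_hull {r : ℝ} (hr : |r| ≤ 1) (c : Fin 4) :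
    1 + r • pauliMat c ∈ PointedCone.hull ℝ {σ | IsStab1 σ} := by
  have hmem {t a b c : ℝ} (ht : 0 ≤ t) (h : |a| + |b| + |c| ≤ 1) :
      t • blochMat a b c ∈ PointedCone.hull ℝ {σ | IsStab1 σ} :=
    PointedCone.smul_mem _ ht (PointedCone.subset_hull (isStab1_blochMat h))
  have hr' : 0 ≤ 2 * (1 + r) := by linarith [neg_le_of_abs_le hr]
  fin_cases c
  · convert hmem (t := 2 * (1 + r)) (a := 0) (b := 0) (c := 0) hr' (by simp) using 1
    simp only [pauliMat, blochMat, ← Complex.coe_smul, Complex.ofReal_zero, zero_smul, add_zero]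
    push_cast
    change (1 : Matrix (Fin 2) (Fin 2) ℂ) + (r : ℂ) • (1 : Matrix (Fin 2) (Fin 2) ℂ) = _
    module
  · convert hmem (t := 2) (a := r) (b := 0) (c := 0) zero_le_two (by simpa) using 1
    simp [pauliMat, blochMat, ← Complex.coe_smul]
  · convert hmem (t := 2) (a := 0) (b := r) (c := 0) zero_le_two (by simpa) using 1
    simp [pauliMat, blochMat, ← Complex.coe_smul]
  · convert hmem (t := 2) (a := 0) (b := 0) (c := r) zero_le_two (by simpa) using 1
    simp [pauliMat, blochMat, ← Complex.coe_smul]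

lemma one_add_smul_mul_one_add_smul {A : Type*} [Ring A] [Algebra ℝ A] {P : A} (hP : P * P = 1)
    {r : ℝ} (hr : r * r = 1) (t : ℝ) :
    (1 + r • P) * (1 + t • P) = (1 + r * t) • (1 + r • P) := by
  calc (1 + r • P) * (1 + t • P) = 1 + r • P + t • P + (r * t) • (P * P) := by
        simp only [mul_add, add_mul, one_mul, mul_one, smul_mul_smul_comm]
        abel
    _ = 1 + r • P + (r * r * t) • P + (r * t) • 1 := by rw [hP, hr, one_mul]
    _ = (1 + r * t) • (1 + r • P) := by module

lemma one_add_mul_one_add_mem_hull {ε δ : SignType} {c d : Fin 4}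
    (h : Commute ((ε : ℝ) • pauliMat c) ((δ : ℝ) • pauliMat d)) :
    (1 + (ε : ℝ) • pauliMat c) * (1 + (δ : ℝ) • pauliMat d) ∈
      PointedCone.hull ℝ {σ | IsStab1 σ} := by
  have habs (α : SignType) : |(α : ℝ)| ≤ 1 := by cases α <;> simp
  have hnonneg (α : SignType) : (0 : ℝ) ≤ 1 + α := by linarith [neg_le_of_abs_le (habs α)]
  have hsmul (α β : SignType) (e : Fin 4) :
      (1 + (α : ℝ)) • (1 + (β : ℝ) • pauliMat e) ∈ PointedCone.hull ℝ {σ | IsStab1 σ} :=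
    PointedCone.smul_mem _ (hnonneg α) (one_add_smul_pauliMat_mem_hull (habs β) e)
  have hscalar (α : SignType) : 1 + (α : ℝ) • pauliMat 0 = (1 + (α : ℝ)) • 1 := by
    rw [add_smul, one_smul]; rfl
  rcases eq_or_ne ε 0 with rfl | hε
  · simpa using one_add_smul_pauliMat_mem_hull (habs δ) d
  rcases eq_or_ne δ 0 with rfl | hδ
  · simpa using one_add_smul_pauliMat_mem_hull (habs ε) c
  have hcomm : Commute (pauliMat c) (pauliMat d) := by
    have hε' : (ε : ℝ) ≠ 0 := by cases ε <;> simp at hε ⊢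
    have hδ' : (δ : ℝ) ≠ 0 := by cases δ <;> simp at hδ ⊢
    exact (Commute.smul_left_iff₀ hε').mp ((Commute.smul_right_iff₀ hδ').mp h)
  rcases eq_zero_or_eq_of_commute_pauliMat hcomm with rfl | rfl | rfl
  · rw [hscalar, smul_mul_assoc, one_mul]
    exact hsmul ε δ d
  · rw [hscalar, mul_smul_comm, mul_one]
    exact hsmul δ ε c
  · have hsq : (ε : ℝ) * ε = 1 := by cases ε <;> simp at hε ⊢
    rw [one_add_smul_mul_one_add_smul (pauliMat_mul_self c) hsq, ← SignType.coe_mul]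
    exact hsmul (ε * δ) ε c

lemma compress_mem_hull_of_commute_PiZZ {i : Fin 2} {s t : Bool} {a b c d : Fin 4}
    (hPQ : Commute (signedPauli2 s a b) (signedPauli2 t c d))
    (hP : Commute (signedPauli2 s a b) (PiZZ i)) :
    (blockIsometry i)ᴴ * ((1 + signedPauli2 s a b) * (1 + signedPauli2 t c d)) *
      blockIsometry i ∈ PointedCone.hull ℝ {σ | IsStab1 σ} := by
  have hV := conjTranspose_blockIsometry_mul_self i
  rw [← blockIsometry_mul_conjTranspose] at hP
  have hone_add (Q : Matrix (Fin 2 × Fin 2) (Fin 2 × Fin 2) ℂ) :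
      (blockIsometry i)ᴴ * (1 + Q) * blockIsometry i =
        1 + (blockIsometry i)ᴴ * Q * blockIsometry i := by
    rw [Matrix.mul_add, Matrix.add_mul, Matrix.mul_one, hV]
  obtain ⟨ε, e, hε⟩ := exists_compress_signedPauli2_eq i s a b
  obtain ⟨δ, f, hδ⟩ := exists_compress_signedPauli2_eq i t c d
  rw [compress_mul_of_commute_left hV ((Commute.one_left _).add_left hP), hone_add, hone_add,
    hε, hδ]
  apply one_add_mul_one_add_mem_hull
  rw [← hε, ← hδ, Commute, SemiconjBy, ← compress_mul_of_commute_left hV hP, hPQ.eq,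
    compress_mul_of_commute_right hV hP]

lemma commute_PiZZ_or_compress_eq_zero (i : Fin 2) (s : Bool) (a b : Fin 4) :
    Commute (signedPauli2 s a b) (PiZZ i) ∨
      (blockIsometry i)ᴴ * signedPauli2 s a b * blockIsometry i = 0 := by
  rcases commute_or_anticommute_signedPauli2 s (i = 1) a b 3 3 with h | h
  · left
    rw [PiZZ_eq]
    exact ((Commute.one_right _).add_right h).smul_right _
  · right
    refine compress_eq_zero_of_mul_eq (conjTranspose_blockIsometry_mul_self i) ?_
    rw [blockIsometry_mul_conjTranspose, PiZZ_eq, mul_smul_comm, mul_add, mul_one, h, sub_mul,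
      smul_mul_assoc, add_mul, one_mul]
    module

lemma IsPureStab2.compress_mem_hull {σ : Matrix (Fin 2 × Fin 2) (Fin 2 × Fin 2) ℂ}
    (hσ : IsPureStab2 σ) (i : Fin 2) :
    (blockIsometry i)ᴴ * σ * blockIsometry i ∈ PointedCone.hull ℝ {σ | IsStab1 σ} := by
  obtain ⟨s, t, a, b, c, d, hPQ, rfl, -⟩ := hσ
  have hquarter : (1 / 4 : ℂ) = ((1 / 4 : ℝ) : ℂ) := by norm_num
  rw [hquarter, Complex.coe_smul, Matrix.mul_smul, Matrix.smul_mul]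
  refine PointedCone.smul_mem _ (by norm_num) ?_
  rcases commute_PiZZ_or_compress_eq_zero i s a b with hP | hP
  · exact compress_mem_hull_of_commute_PiZZ hPQ hP
  rcases commute_PiZZ_or_compress_eq_zero i t c d with hQ | hQ
  · have hcomm : Commute (1 + signedPauli2 s a b) (1 + signedPauli2 t c d) :=
      (Commute.one_left _).add_left ((Commute.one_right _).add_right hPQ)
    rw [hcomm.eq]
    exact compress_mem_hull_of_commute_PiZZ hPQ.symm hQ
  -- Both generators are compressed to `0`, so only the identity and their product survive.
  obtain ⟨u, e, f, huv⟩ := exists_signedPauli2_mul_eq hPQ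
  obtain ⟨ε, g, hε⟩ := exists_compress_signedPauli2_eq i u e f
  have hexpand : (blockIsometry i)ᴴ * ((1 + signedPauli2 s a b) * (1 + signedPauli2 t c d)) *
      blockIsometry i = 1 + (ε : ℝ) • pauliMat g := by
    rw [add_mul, one_mul, mul_add, mul_one, huv]
    simp only [Matrix.mul_add, Matrix.add_mul, hP, hQ, hε, Matrix.mul_one,
      conjTranspose_blockIsometry_mul_self, add_zero, zero_add]
  rw [hexpand]
  exact one_add_smul_pauliMat_mem_hull (by cases ε <;> simp) g

lemma IsStab2.compress_mem_hull {σ : Matrix (Fin 2 × Fin 2) (Fin 2 × Fin 2) ℂ}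
    (hσ : IsStab2 σ) (i : Fin 2) :
    (blockIsometry i)ᴴ * σ * blockIsometry i ∈ PointedCone.hull ℝ {σ | IsStab1 σ} := by
  refine convexHull_min (t := {σ | (blockIsometry i)ᴴ * σ * blockIsometry i ∈
    PointedCone.hull ℝ {σ | IsStab1 σ}}) (fun τ hτ => hτ.compress_mem_hull i) ?_ hσ
  intro τ hτ τ' hτ' r r' hr hr' _
  simp only [Set.mem_ofPred_eq, Matrix.mul_add, Matrix.add_mul, Matrix.mul_smul, Matrix.smul_mul]
  exact add_mem (PointedCone.smul_mem _ hr hτ) (PointedCone.smul_mem _ hr' hτ')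

lemma IsStab2.trace_eq_one {σ : Matrix (Fin 2 × Fin 2) (Fin 2 × Fin 2) ℂ} (hσ : IsStab2 σ) :
    σ.trace = 1 := by
  refine convexHull_min (t := {σ | σ.trace = 1}) ?_ ?_ hσ
  · rintro τ ⟨_, _, _, _, _, _, -, -, htrace⟩
    exact htrace
  · intro τ hτ τ' hτ' r r' _ _ hrr
    rw [Set.mem_ofPred_eq] at hτ hτ' ⊢
    rw [Matrix.trace_add, Matrix.trace_smul, Matrix.trace_smul, hτ, hτ', ← add_smul, hrr,
      one_smul]

/-- The eigenstate of the Pauli matrix `pauliMat c`, for `c ≠ 0`, with eigenvalue `-1` if `s` is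
`true` and `1` otherwise. -/
def pauliEigenstate (s : Bool) (c : Fin 4) : Matrix (Fin 2) (Fin 2) ℂ :=
  (1 / 2 : ℂ) • (1 + (if s then (-1 : ℂ) else 1) • pauliMat c)

lemma trace_pauliEigenstate_succ (s : Bool) (c : Fin 3) :
    (pauliEigenstate s c.succ).trace = 1 := by
  have htrace : (pauliMat c.succ).trace = 0 := by
    fin_cases c <;> simp [pauliMat, sigmaX, sigmaY, sigmaZ, Matrix.trace_fin_two]
  rw [pauliEigenstate, Matrix.trace_smul, Matrix.trace_add, Matrix.trace_smul, htrace,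
    Matrix.trace_one]
  simp

lemma IsStab1.mem_convexHull {σ : Matrix (Fin 2) (Fin 2) ℂ} (hσ : IsStab1 σ) :
    σ ∈ convexHull ℝ (Set.range fun p : Bool × Fin 3 => pauliEigenstate p.1 p.2.succ) := by
  obtain ⟨a, b, c, habc, rfl⟩ := hσ
  let v : Fin 3 → ℝ := ![a, b, c]
  -- `m k` is the total weight of the two eigenstates on axis `k`; the third axis takes the slack.
  let m : Fin 3 → ℝ := ![|a|, |b|, 1 - |a| - |b|]
  have hv (k : Fin 3) : |v k| ≤ m k := by
    fin_cases k
    exacts [le_rfl, le_rfl, le_sub_iff_add_le'.mpr (le_sub_iff_add_le'.mpr (by rwa [← add_assoc]))]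
  have hsum := (convex_convexHull ℝ _).sum_mem (t := Finset.univ)
    (w := fun p : Bool × Fin 3 => (m p.2 + (if p.1 then -1 else 1) * v p.2) / 2)
    (z := fun p => pauliEigenstate p.1 p.2.succ) ?_ ?_
    fun p _ => subset_convexHull ℝ (Set.range fun p : Bool × Fin 3 => _) ⟨p, rfl⟩
  · convert hsum using 1
    simp only [Fintype.sum_prod_type, Fintype.sum_bool, Fin.sum_univ_three, m, v, pauliEigenstate,
      pauliMat, ← Complex.coe_smul, cons_val_succ, cons_val, Bool.false_eq_true, ↓reduceIte]
    push_cast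
    module
  · rintro ⟨s, k⟩ -
    have := abs_le.mp (hv k)
    cases s <;> simp only [Bool.false_eq_true, ↓reduceIte, one_mul, neg_mul] <;> linarith
  · simp only [Fintype.sum_prod_type, Fintype.sum_bool, Fin.sum_univ_three, m, cons_val,
      Bool.false_eq_true, ↓reduceIte]
    ring

lemma commute_logicalPauli_PiZZ (i : Fin 2) (c : Fin 4) : Commute (logicalPauli c) (PiZZ i) := by
  have hL : logicalPauli c = signedPauli2 false c (![0, 1, 1, 0] c) := by
    simp [logicalPauli, signedPauli2]
  have hne : (blockIsometry i)ᴴ * logicalPauli c * blockIsometry i ≠ 0 := by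
    rw [compress_logicalPauli]
    intro hzero
    simpa [hzero] using pauliMat_mul_self c
  rw [hL] at hne ⊢
  exact (commute_PiZZ_or_compress_eq_zero i false c _).resolve_right hne

lemma blockIsometry_conj_pauliMat (i : Fin 2) (c : Fin 4) :
    blockIsometry i * pauliMat c * (blockIsometry i)ᴴ = PiZZ i * logicalPauli c := by
  have hidem : PiZZ i * PiZZ i = PiZZ i := by
    rw [← blockIsometry_mul_conjTranspose, Matrix.mul_assoc, ← Matrix.mul_assoc (blockIsometry i)ᴴ,
      conjTranspose_blockIsometry_mul_self, Matrix.one_mul]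
  calc blockIsometry i * pauliMat c * (blockIsometry i)ᴴ
      = PiZZ i * (logicalPauli c * PiZZ i) := by
        rw [← compress_logicalPauli i, ← blockIsometry_mul_conjTranspose]
        simp only [Matrix.mul_assoc]
    _ = PiZZ i * logicalPauli c := by
        rw [(commute_logicalPauli_PiZZ i c).eq, ← Matrix.mul_assoc, hidem]

lemma isPureStab2_encode_pauliEigenstate (i : Fin 2) (s : Bool) (c : Fin 3) :
    IsPureStab2 (blockIsometry i * pauliEigenstate s c.succ * (blockIsometry i)ᴴ) := by
  set L := signedPauli2 s c.succ (![0, 1, 1, 0] c.succ) with hL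
  have hL_eq : L = (if s then (-1 : ℂ) else 1) • logicalPauli c.succ := rfl
  have hcomm : Commute L (PiZZ i) := (commute_logicalPauli_PiZZ i c.succ).smul_left _
  refine ⟨decide (i = 1), s, 3, 3, c.succ, ![0, 1, 1, 0] c.succ, ?_, ?_, ?_⟩
  · rw [← hL]
    have hZ : signedPauli2 (i = 1) 3 3 = (2 : ℂ) • PiZZ i - 1 := by rw [PiZZ_eq]; module
    rw [hZ]
    exact ((hcomm.smul_right 2).sub_right (Commute.one_right L)).symm.eq
  · calc blockIsometry i * pauliEigenstate s c.succ * (blockIsometry i)ᴴ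
        = (1 / 2 : ℂ) • (PiZZ i * (1 + L)) := by
          rw [hL_eq, Matrix.mul_add, Matrix.mul_smul, ← blockIsometry_conj_pauliMat,
            ← blockIsometry_mul_conjTranspose, pauliEigenstate]
          simp only [Matrix.mul_smul, Matrix.smul_mul, Matrix.mul_add, Matrix.add_mul,
            Matrix.mul_one]
      _ = (1 / 4 : ℂ) • ((1 + signedPauli2 (i = 1) 3 3) * (1 + L)) := by
          rw [PiZZ_eq, Matrix.smul_mul, smul_smul]; norm_num
  · rw [Matrix.trace_mul_cycle, conjTranspose_blockIsometry_mul_self, Matrix.one_mul,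
      trace_pauliEigenstate_succ]

lemma IsStab1.isStab2_encode {σ : Matrix (Fin 2) (Fin 2) ℂ} (hσ : IsStab1 σ) (i : Fin 2) :
    IsStab2 (blockIsometry i * σ * (blockIsometry i)ᴴ) := by
  refine convexHull_min (t := {σ | IsStab2 (blockIsometry i * σ * (blockIsometry i)ᴴ)}) ?_ ?_
    hσ.mem_convexHull
  · rintro _ ⟨p, rfl⟩
    exact subset_convexHull ℝ _ (isPureStab2_encode_pauliEigenstate i p.1 p.2)
  · intro τ hτ τ' hτ' r r' hr hr' hrr
    simp only [Set.mem_ofPred_eq, Matrix.mul_add, Matrix.add_mul, Matrix.mul_smul, Matrix.smul_mul]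
    exact convex_convexHull ℝ _ hτ hτ' hr hr' hrr

lemma encBlock_eq (i : Fin 2) (x y : ℝ) :
    encBlock i x y = blockIsometry i * blochMat x y 0 * (blockIsometry i)ᴴ := by
  have hbloch : blochMat x y 0 = (blockIsometry i)ᴴ * ((1 / 2 : ℂ) • (1 +
      (x : ℂ) • logicalPauli 1 + (y : ℂ) • logicalPauli 2)) * blockIsometry i := by
    simp only [Matrix.mul_smul, Matrix.smul_mul, Matrix.mul_add, Matrix.add_mul, Matrix.mul_one,
      conjTranspose_blockIsometry_mul_self, compress_logicalPauli]
    exact blochMat_zero x y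
  rw [hbloch, encBlock, ← blockIsometry_mul_conjTranspose]
  simp only [Matrix.mul_assoc]
  rfl

lemma Rob1_eq_robustness (ρ : Matrix (Fin 2) (Fin 2) ℂ) :
    Rob1 ρ = robustness {σ | IsStab1 σ} ρ := by
  simp only [Rob1, Complex.coe_smul]
  rfl

lemma Rob2_eq_robustness (ρ : Matrix (Fin 2 × Fin 2) (Fin 2 × Fin 2) ℂ) :
    Rob2 ρ = robustness {σ | IsStab2 σ} ρ := by
  simp only [Rob2, Complex.coe_smul]
  rfl

theorem block_additivity_of_robustness_general {q : Fin 2 → ℝ}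
    {ρ : Fin 2 → Matrix (Fin 2) (Fin 2) ℂ} (hq : ∀ i, 0 ≤ q i) (hq_sum : ∑ i, q i = 1)
    (hρ : ∀ i, (ρ i).IsHermitian) (hρ_trace : ∀ i, (ρ i).trace = 1) :
    Rob2 (∑ i, q i • (blockIsometry i * ρ i * (blockIsometry i)ᴴ)) = ∑ i, q i * Rob1 (ρ i) := by
  have hmixed : IsStab1 ((1 / 2 : ℝ) • 1) := by
    have h := isStab1_blochMat (a := 0) (b := 0) (c := 0) (by simp)
    simpa [blochMat, ← Complex.coe_smul] using h
  simp only [Rob1_eq_robustness, Rob2_eq_robustness]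
  refine robustness_sum_conj conjTranspose_blockIsometry_mul ?_ convex_isStab1 ⟨_, hmixed⟩
    (convex_convexHull ℝ _) (fun _ => IsStab1.trace_eq_one) (fun _ => IsStab2.trace_eq_one)
    (fun i _ hσ => hσ.isStab2_encode i) (fun i _ hσ => hσ.compress_mem_hull i) hq hq_sum
    hρ_trace fun i => robustnessFactors_nonempty one_half_pos hmixed (hρ i)
  rw [← sum_PiZZ]
  exact Finset.sum_congr rfl fun i _ => blockIsometry_mul_conjTranspose i

/-- For `J = q₀ Π₀ ρ₀,L Π₀ + q₁ Π₁ ρ₁,L Π₁` with `q₀ + q₁ = 1`,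
the two-qubit stabilizer robustness is additive over the blocks:
`R_F(J) = q₀ R_F(ρ₀) + q₁ R_F(ρ₁)`. -/
theorem block_additivity_of_robustness (q0 q1 x0 y0 x1 y1 : ℝ)
    (hq0 : 0 ≤ q0) (hq1 : 0 ≤ q1) (hq : q0 + q1 = 1)
    (h0 : x0^2 + y0^2 ≤ 1) (h1 : x1^2 + y1^2 ≤ 1) :
    Rob2 ((q0 : ℂ) • encBlock 0 x0 y0 + (q1 : ℂ) • encBlock 1 x1 y1)
      = q0 * Rob1 ((1/2 : ℂ) • (1 + (x0 : ℂ) • sigmaX + (y0 : ℂ) • sigmaY))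
      + q1 * Rob1 ((1/2 : ℂ) • (1 + (x1 : ℂ) • sigmaX + (y1 : ℂ) • sigmaY)) := by
  have h := block_additivity_of_robustness_general (q := ![q0, q1])
    (ρ := ![blochMat x0 y0 0, blochMat x1 y1 0]) (by simp [Fin.forall_fin_two, hq0, hq1])
    (by simpa using hq) (by simp [Fin.forall_fin_two, isHermitian_blochMat])
    (by simp [Fin.forall_fin_two, trace_blochMat])
  rw [← blochMat_zero, ← blochMat_zero]
  simpa [Fin.sum_univ_two, encBlock_eq] using h
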